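/- arXiv:1801.01556 — 4 statements merged into one kernel-verified Lean document; each statement's English description precedes it below -/
import Mathlib

section
/- For every integer k ≥ 5 and every graph G on n vertices, the number of induced copies of the cycle C_k of length k in G is at most 2n^k/k^k. -/
/-!
Place the vertices of `C_k` in `G` one at a time, each chosen uniformly among the vertices having
the prescribed adjacencies to the earlier ones. An embedding then arises with probability the
inverse of the product of the numbers of choices, and these probabilities sum to at most `1`. By
AM-GM the product is bounded in terms of a weighted sum of the numbers of choices, with weights
`1/k, 1/2, 1/2, 1, …, 1` of product `1/(4k)`. Averaged over the `k` rotations of the cycle, each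
vertex of `G` contributes at most `1` to this sum, whatever its neighbourhood on the cycle. Hence
there are at most `4k (n/k)^k` embeddings, and each induced copy accounts for at least `2k` of them.
-/

open Finset SimpleGraph
open scoped Fin.CommRing

section Sampling

variable {V : Type*} [Fintype V] {k : ℕ}

/-- If `f 0, f 1, …` are chosen in turn, each `f i` uniformly from `C i f`, then the product is the
probability of obtaining `f`. -/
lemma sum_prod_inv_card_le_one (C : Fin k → (Fin k → V) → Finset V)
    [DecidablePred fun f : Fin k → V ↦ ∀ i, f i ∈ C i f]
    (hC : ∀ i f g, (∀ j < i, f j = g j) → C i f = C i g) :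
    ∑ f with ∀ i, f i ∈ C i f, ∏ i, (#(C i f) : ℝ)⁻¹ ≤ 1 := by
  classical
  induction k with
  | zero => simp
  | succ k ih =>
    rcases isEmpty_or_nonempty V with hV | ⟨⟨w⟩⟩
    · simp
    obtain ⟨C', init_eq⟩ : ∃ C' : Fin k → (Fin k → V) → Finset V,
        ∀ g (v : V) i, C i.castSucc (Fin.snoc g v) = C' i g :=
      ⟨fun i g ↦ C i.castSucc (Fin.snoc g w), fun g v i ↦ hC _ _ _ fun j hj ↦ by
        obtain ⟨j, rfl⟩ := Fin.exists_castSucc_eq.2 (hj.trans (Fin.castSucc_lt_last i)).ne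
        simp⟩
    obtain ⟨L, last_eq⟩ : ∃ L : (Fin k → V) → Finset V,
        ∀ g (v : V), C (Fin.last k) (Fin.snoc g v) = L g :=
      ⟨fun g ↦ C (Fin.last k) (Fin.snoc g w), fun g v ↦ hC _ _ _ fun j hj ↦ by
        obtain ⟨j, rfl⟩ := Fin.exists_castSucc_eq.2 hj.ne
        simp⟩
    have hC' (i : Fin k) (f g : Fin k → V) (hfg : ∀ j < i, f j = g j) : C' i f = C' i g := by
      rw [← init_eq f w, ← init_eq g w]
      refine hC _ _ _ fun j hj ↦ ?_
      obtain ⟨j, rfl⟩ := Fin.exists_castSucc_eq.2 (hj.trans (Fin.castSucc_lt_last i)).ne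
      simpa using hfg j (by simpa using hj)
    refine le_trans ?_ (ih C' hC')
    rw [sum_filter, sum_filter, ← (Fin.snocEquiv fun _ ↦ V).sum_comp, Fintype.sum_prod_type_right]
    refine sum_le_sum fun g _ ↦ ?_
    simp only [Fin.snocEquiv, Equiv.coe_fn_mk, Fin.forall_fin_succ', Fin.prod_univ_castSucc,
      Fin.snoc_castSucc, Fin.snoc_last, init_eq, last_eq]
    split_ifs with hg
    · simp only [hg, implies_true, true_and, sum_ite_mem, univ_inter, sum_const, nsmul_eq_mul]
      rw [mul_left_comm]
      exact mul_le_of_le_one_right (prod_nonneg fun _ _ ↦ by positivity) mul_inv_le_one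
    · simp [hg]

end Sampling

lemma one_add_sum_one_sub_le_prod_inv {ι : Type*} (s : Finset ι) (x : ι → ℝ)
    (hx : ∀ i ∈ s, 0 < x i) : 1 + ∑ i ∈ s, (1 - x i) ≤ ∏ i ∈ s, (x i)⁻¹ := by
  calc 1 + ∑ i ∈ s, (1 - x i) ≤ Real.exp (∑ i ∈ s, (1 - x i)) := by
        simpa only [add_comm] using Real.add_one_le_exp (∑ i ∈ s, (1 - x i))
    _ = ∏ i ∈ s, Real.exp (1 - x i) := Real.exp_sum _ _
    _ ≤ ∏ i ∈ s, (x i)⁻¹ := prod_le_prod (fun i _ ↦ (Real.exp_pos _).le) fun i hi ↦ by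
        rw [← neg_sub, Real.exp_neg]
        exact inv_anti₀ (hx i hi) (by simpa using Real.add_one_le_exp (x i - 1))

lemma sum_embedding_comp_iso {V W M : Type*} [AddCommMonoid M] {G : SimpleGraph V}
    {H : SimpleGraph W} [Fintype (H ↪g G)] (σ : H ≃g H) (F : (W → V) → M) :
    ∑ φ : H ↪g G, F (φ ∘ σ) = ∑ φ : H ↪g G, F φ :=
  (RelIso.relEmbeddingCongr σ.symm (RelIso.refl G.Adj)).sum_comp fun φ : H ↪g G ↦ F φ

section Candidates

variable {V : Type*} {k : ℕ} {G : SimpleGraph V} {H : SimpleGraph (Fin k)}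

variable (H) in
open Classical in
/-- The positions `i` at which a vertex adjacent exactly to the positions in `B` may be placed when
`H` is embedded in the order `0, 1, …, k - 1`: only the earlier positions `j < i` matter. -/
noncomputable def fittingPositions (B : Set (Fin k)) : Finset (Fin k) :=
  {i | ∀ j < i, j ∈ B ↔ H.Adj i j}

variable [Fintype V]

variable (G H) in
open Classical in
/-- The vertices of `G` whose adjacencies to `f j`, `j < i`, are those required of the image of `i`
under an embedding of `H` extending `f`. The values `f j` with `j ≥ i` are ignored; a vertex
already used may occur. -/
noncomputable def candidates (f : Fin k → V) (i : Fin k) : Finset V :=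
  {v | i ∈ fittingPositions H (f ⁻¹' G.neighborSet v)}

lemma mem_fittingPositions {B : Set (Fin k)} {i : Fin k} :
    i ∈ fittingPositions H B ↔ ∀ j < i, j ∈ B ↔ H.Adj i j := by
  simp [fittingPositions]

lemma mem_candidates {f : Fin k → V} {i : Fin k} {v : V} :
    v ∈ candidates G H f i ↔ i ∈ fittingPositions H (f ⁻¹' G.neighborSet v) := by
  simp [candidates]

lemma candidates_congr {f g : Fin k → V} {i : Fin k} (h : ∀ j < i, f j = g j) :
    candidates G H f i = candidates G H g i := by
  ext v
  simp only [mem_candidates, mem_fittingPositions, Set.mem_preimage]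
  exact forall₂_congr fun j hj ↦ by rw [h j hj]

lemma apply_mem_candidates (φ : H ↪g G) (i : Fin k) : φ i ∈ candidates G H φ i := by
  simp [mem_candidates, mem_fittingPositions]

lemma sum_weight_mul_card_candidates (c : Fin k → ℝ) (f : Fin k → V) :
    ∑ i, c i * #(candidates G H f i) =
      ∑ v, ∑ i ∈ fittingPositions H (f ⁻¹' G.neighborSet v), c i := by
  simp only [mul_comm (c _), ← nsmul_eq_mul, ← sum_const]
  exact sum_comm' fun i v ↦ by simp [mem_candidates]

variable [Fintype (H ↪g G)]

open Classical in
lemma sum_embedding_prod_inv_card_candidates_le_one :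
    ∑ φ : H ↪g G, ∏ i, (#(candidates G H φ i) : ℝ)⁻¹ ≤ 1 := by
  calc ∑ φ : H ↪g G, ∏ i, (#(candidates G H φ i) : ℝ)⁻¹
      = ∑ f ∈ univ.image (fun φ : H ↪g G ↦ (φ : Fin k → V)), ∏ i, (#(candidates G H f i) : ℝ)⁻¹ :=
        (sum_image (f := fun f ↦ ∏ i, (#(candidates G H f i) : ℝ)⁻¹)
          (DFunLike.coe_injective (F := H ↪g G)).injOn).symm
    _ ≤ ∑ f with ∀ i, f i ∈ candidates G H f i, ∏ i, (#(candidates G H f i) : ℝ)⁻¹ := by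
        refine sum_le_sum_of_subset_of_nonneg ?_ fun f _ _ ↦ by positivity
        simpa [image_subset_iff] using apply_mem_candidates
    _ ≤ 1 := sum_prod_inv_card_le_one _ fun i f g ↦ candidates_congr

lemma sum_embedding_weight_mul_card_candidates_le {ι : Type*} [Fintype ι] [Nonempty ι]
    (σ : ι → H ≃g H) (c : Fin k → ℝ)
    (hσ : ∀ A : Set (Fin k), ∑ s, ∑ i ∈ fittingPositions H (σ s ⁻¹' A), c i ≤ Fintype.card ι) :
    ∑ φ : H ↪g G, ∑ i, c i * #(candidates G H φ i) ≤
      Fintype.card (H ↪g G) * Fintype.card V := by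
  have hι : (0 : ℝ) < Fintype.card ι := mod_cast Fintype.card_pos
  refine le_of_mul_le_mul_left ?_ hι
  calc Fintype.card ι * ∑ φ : H ↪g G, ∑ i, c i * #(candidates G H φ i)
      = ∑ s, ∑ φ : H ↪g G, ∑ i, c i * #(candidates G H (φ ∘ σ s) i) := by
        simp only [sum_embedding_comp_iso (V := V) _ fun f ↦ ∑ i, c i * (#(candidates G H f i) : ℝ),
          sum_const, card_univ, nsmul_eq_mul]
    _ = ∑ φ : H ↪g G, ∑ v, ∑ s,
          ∑ i ∈ fittingPositions H (σ s ⁻¹' (φ ⁻¹' G.neighborSet v)), c i := by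
        rw [sum_comm]
        refine sum_congr rfl fun φ _ ↦ ?_
        simp only [sum_weight_mul_card_candidates, Set.preimage_comp]
        exact sum_comm
    _ ≤ ∑ _φ : H ↪g G, ∑ _v : V, (Fintype.card ι : ℝ) :=
        sum_le_sum fun φ _ ↦ sum_le_sum fun v _ ↦ hσ _
    _ = Fintype.card ι * (Fintype.card (H ↪g G) * Fintype.card V) := by
        simp only [sum_const, card_univ, nsmul_eq_mul]
        ring

lemma card_embedding_le_of_weight {c : Fin k → ℝ} (hc : ∀ i, 0 < c i)
    (h : ∑ φ : H ↪g G, ∑ i, c i * #(candidates G H φ i) ≤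
      Fintype.card (H ↪g G) * Fintype.card V) :
    Fintype.card (H ↪g G) ≤ ((Fintype.card V : ℝ) / k) ^ k * (∏ i, c i)⁻¹ := by
  set n : ℝ := (Fintype.card V : ℝ) with hn
  set N : ℝ := (Fintype.card (H ↪g G) : ℝ)
  set S : (H ↪g G) → Fin k → ℝ := fun φ i ↦ #(candidates G H φ i)
  have hx (φ : H ↪g G) (i : Fin k) : 0 < k / n * (c i * S φ i) := by
    have : 0 < (k : ℝ) := mod_cast i.pos
    have : 0 < n := Nat.cast_pos.2 (Fintype.card_pos_iff.2 ⟨φ i⟩)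
    have : 0 < S φ i := Nat.cast_pos.2 (card_pos.2 ⟨_, apply_mem_candidates φ i⟩)
    have := hc i
    positivity
  have hscale : k / n * ∑ φ, ∑ i, c i * S φ i ≤ N * k := calc
    _ ≤ k / n * (N * n) := by gcongr
    _ = N * k * (n / n) := by ring
    _ ≤ N * k := mul_le_of_le_one_right (by positivity) (div_self_le_one n)
  calc N ≤ N + N * k - k / n * ∑ φ, ∑ i, c i * S φ i := by linarith
    _ = ∑ φ, (1 + ∑ i, (1 - k / n * (c i * S φ i))) := by
        simp only [sum_add_distrib, sum_sub_distrib, ← mul_sum, sum_const, card_univ,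
          Fintype.card_fin, nsmul_eq_mul, mul_one, N, add_sub_assoc]
    _ ≤ ∑ φ, ∏ i, (k / n * (c i * S φ i))⁻¹ :=
        sum_le_sum fun φ _ ↦ one_add_sum_one_sub_le_prod_inv _ _ fun i _ ↦ hx φ i
    _ = (n / k) ^ k * (∏ i, c i)⁻¹ * ∑ φ, ∏ i, (S φ i)⁻¹ := by
        simp only [mul_inv, prod_mul_distrib, inv_div, prod_const, card_univ, Fintype.card_fin,
          prod_inv_distrib, mul_sum, mul_assoc]
    _ ≤ (n / k) ^ k * (∏ i, c i)⁻¹ := by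
        have := prod_pos fun i (_ : i ∈ univ) ↦ hc i
        exact mul_le_of_le_one_right (by positivity)
          (sum_embedding_prod_inv_card_candidates_le_one)

end Candidates

section ClosingAt
variable {R : Type*} [CommRing R] {A : Set R} {s t : R}

variable (A s) in
/-- Away from `s - 1`, the set `A` is exactly `{s - 2, s}`. When a cycle is traversed starting from
`s`, this says that a vertex with neighbourhood `A` fits in its last position `s - 1`. -/
def IsClosingAt : Prop :=
  ∀ a ≠ s - 1, a ∈ A ↔ a = s - 2 ∨ a = s

namespace IsClosingAt

lemma mem [Nontrivial R] (hs : IsClosingAt A s) : s ∈ A :=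
  (hs s fun h ↦ one_ne_zero (α := R) (by linear_combination h)).2 (.inr rfl)

lemma sub_two_mem [Nontrivial R] (hs : IsClosingAt A s) : s - 2 ∈ A :=
  (hs (s - 2) fun h ↦ one_ne_zero (α := R) (by linear_combination -h)).2 (.inl rfl)

lemma unique (h_three : (3 : R) ≠ 0) (h_four : (4 : R) ≠ 0) (hs : IsClosingAt A s)
    (ht : IsClosingAt A t) : s = t := by
  have : Nontrivial R := nontrivial_of_ne _ _ h_three
  have h_two : (2 : R) ≠ 0 := fun h ↦ h_four (by linear_combination 2 * h)
  by_contra hst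
  have hst' : s = t - 1 ∨ s = t - 2 := by grind [IsClosingAt, hs.mem]
  have hts' : t = s - 1 ∨ t = s - 2 := by grind [IsClosingAt, ht.mem]
  grind

end IsClosingAt

open Classical in
lemma two_le_card_mem_or_add_one_mem [Fintype R] [Nontrivial R] (hA : A.Nonempty) :
    2 ≤ #{s | s ∈ A ∨ s + 1 ∈ A} := by
  obtain ⟨a, ha⟩ := hA
  rw [← card_pair (show a ≠ a - 1 by simp [eq_sub_iff_add_eq])]
  exact card_le_card fun s hs ↦ by grind

open Classical in
lemma four_le_card_mem_or_add_one_mem [Fintype R] (h_two : (2 : R) ≠ 0) (h_three : (3 : R) ≠ 0)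
    (hs : s ∈ A) (hs' : s - 2 ∈ A) : 4 ≤ #{s | s ∈ A ∨ s + 1 ∈ A} := by
  have : Nontrivial R := nontrivial_of_ne _ _ h_three
  have h_one_two : (1 : R) ≠ 2 := fun h ↦ one_ne_zero (α := R) (by linear_combination -h)
  have h_one_three : (1 : R) ≠ 3 := fun h ↦ h_two (by linear_combination -h)
  have h_two_three : (2 : R) ≠ 3 := fun h ↦ one_ne_zero (α := R) (by linear_combination -h)
  have h_card : #{s, s - 1, s - 2, s - 3} = 4 := by
    have ne_sub {x : R} (hx : x ≠ 0) : s ≠ s - x := fun h ↦ hx (by linear_combination h)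
    simp [card_insert_of_notMem, *]
  rw [← h_card]
  exact card_le_card fun t ht ↦ by grind

open Classical in
lemma two_add_two_mul_card_isClosingAt_le [Fintype R] (h_three : (3 : R) ≠ 0) (h_four : (4 : R) ≠ 0)
    (hA : A.Nonempty) : 2 + 2 * #{s | IsClosingAt A s} ≤ #{s | s ∈ A ∨ s + 1 ∈ A} := by
  have : Nontrivial R := nontrivial_of_ne _ _ h_three
  have h_two : (2 : R) ≠ 0 := fun h ↦ h_four (by linear_combination 2 * h)
  by_cases! hL : ∃ s, IsClosingAt A s
  · obtain ⟨s, hs⟩ := hL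
    have h_four_le := four_le_card_mem_or_add_one_mem h_two h_three hs.mem hs.sub_two_mem
    have h_le_one : #{s | IsClosingAt A s} ≤ 1 := card_le_one.2 fun t ht u hu ↦
      IsClosingAt.unique h_three h_four ((mem_filter_univ t).1 ht) ((mem_filter_univ u).1 hu)
    omega
  · simpa [hL] using two_le_card_mem_or_add_one_mem hA

end ClosingAt

section Cycle

variable {k : ℕ}

lemma cycleGraph_adj_of_lt {i j : Fin k} (h : j < i) :
    (cycleGraph k).Adj i j ↔ j.val + 1 = i.val ∨ j.val = 0 ∧ i.val + 1 = k := by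
  rw [cycleGraph_adj', Fin.sub_val_of_le h.le, Fin.coe_sub_iff_lt.2 h]
  have := i.isLt
  rw [Fin.lt_def] at h
  omega

/-- The weight of a position in the weighted AM-GM inequality. The first position, into which every
vertex fits, gets `1 / k`; the next two share the weight of a single position. -/
noncomputable def cycleWeight (i : Fin k) : ℝ :=
  if i.val = 0 then 1 / k else if i.val ≤ 2 then 1 / 2 else 1

lemma cycleWeight_pos (i : Fin k) : 0 < cycleWeight i := by
  have : 0 < k := i.pos
  unfold cycleWeight
  split_ifs <;> positivity

lemma cycleWeight_le_one (i : Fin k) : cycleWeight i ≤ 1 := by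
  have : (1 : ℝ) ≤ k := mod_cast i.pos
  unfold cycleWeight
  split_ifs
  · exact div_le_one_of_le₀ this (by positivity)
  · norm_num
  · rfl

lemma prod_cycleWeight (hk : 3 ≤ k) : ∏ i : Fin k, cycleWeight i = 1 / (4 * k) := by
  obtain ⟨m, rfl⟩ := Nat.exists_eq_add_of_le' hk
  have h_prod : ∏ i : Fin (m + 3), cycleWeight i = 1 / (m + 3 : ℕ) * (1 / 2 * (1 / 2)) := by
    simp [Fin.prod_univ_succ, cycleWeight]
  rw [h_prod]
  ring

variable {B : Set (Fin k)} {i j : Fin k}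

lemma mem_iff_of_mem_fittingPositions (hi : i ∈ fittingPositions (cycleGraph k) B)
    (hi_last : i.val + 1 ≠ k) (hji : j < i) : j ∈ B ↔ j.val + 1 = i.val := by
  rw [mem_fittingPositions.1 hi j hji, cycleGraph_adj_of_lt hji]
  tauto

lemma exists_pred_mem_of_mem_fittingPositions (hi : i ∈ fittingPositions (cycleGraph k) B)
    (hi_zero : i.val ≠ 0) : ∃ j ∈ B, j.val + 1 = i.val := by
  have h_succ : i.val - 1 + 1 = i.val := Nat.succ_pred hi_zero
  have h_lt : (⟨i - 1, by omega⟩ : Fin k) < i := Nat.sub_one_lt hi_zero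
  refine ⟨⟨i - 1, by omega⟩, ?_, h_succ⟩
  rw [mem_fittingPositions.1 hi _ h_lt, cycleGraph_adj_of_lt h_lt]
  exact .inl h_succ

lemma val_add_one_eq_of_fittingPositions_lt (hi : i ∈ fittingPositions (cycleGraph k) B)
    (hi_zero : i.val ≠ 0) (hj : j ∈ fittingPositions (cycleGraph k) B) (hij : i < j) :
    j.val + 1 = k := by
  by_contra hj_last
  obtain ⟨p, hpB, hp⟩ := exists_pred_mem_of_mem_fittingPositions hi hi_zero
  have := (mem_iff_of_mem_fittingPositions hj hj_last (by omega)).1 hpB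
  omega

lemma card_filter_fittingPositions_le_one :
    #{i ∈ fittingPositions (cycleGraph k) B | i.val ≠ 0 ∧ i.val + 1 ≠ k} ≤ 1 := by
  refine card_le_one.2 fun i hi j hj ↦ ?_
  obtain ⟨hi, hi_zero, hi_last⟩ := mem_filter.1 hi
  obtain ⟨hj, hj_zero, hj_last⟩ := mem_filter.1 hj
  by_contra hij
  rcases lt_or_gt_of_ne hij with hij | hij
  · exact hj_last (val_add_one_eq_of_fittingPositions_lt hi hi_zero hj hij)
  · exact hi_last (val_add_one_eq_of_fittingPositions_lt hj hj_zero hi hij)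

variable [NeZero k]

lemma val_add_one_eq_iff {i : Fin k} : i.val + 1 = k ↔ i = -1 := by
  obtain ⟨m, rfl⟩ := Nat.exists_eq_succ_of_ne_zero (NeZero.ne k)
  simp [Fin.ext_iff, Fin.coe_neg_one]

open Classical in
lemma cycleWeight_le_of_mem_fittingPositions (hi : i ∈ fittingPositions (cycleGraph k) B)
    (hi_zero : i.val ≠ 0) (hi_last : i.val + 1 ≠ k) :
    cycleWeight i ≤ if 0 ∈ B ∨ 1 ∈ B then 1 / 2 else 1 := by
  split_ifs with hB
  · obtain ⟨j, hjB, hj⟩ : ∃ j ∈ B, j.val ≤ 1 :=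
      hB.elim (⟨0, ·, by simp⟩) (⟨1, ·, Nat.mod_le _ _⟩)
    have hi_le : i.val ≤ 2 := by
      by_contra!
      have := (mem_iff_of_mem_fittingPositions hi hi_last (by omega)).1 hjB
      omega
    simp [cycleWeight, hi_zero, hi_le]
  · exact cycleWeight_le_one i

open Classical in
lemma sum_cycleWeight_fittingPositions_le (B : Set (Fin k)) :
    ∑ i ∈ fittingPositions (cycleGraph k) B, cycleWeight i ≤
      1 / k + (if 0 ∈ B ∨ 1 ∈ B then 1 / 2 else 1) +
        if -1 ∈ fittingPositions (cycleGraph k) B then 1 else 0 := by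
  set S := fittingPositions (cycleGraph k) B
  set M : Finset (Fin k) := {i ∈ S | i.val ≠ 0 ∧ i.val + 1 ≠ k}
  set W : ℝ := if 0 ∈ B ∨ 1 ∈ B then 1 / 2 else 1
  have hW : 0 ≤ W := by positivity
  have cycleWeight_le {i : Fin k} (hi : i ∈ S) : cycleWeight i ≤
      (if i = 0 then (1 / k : ℝ) else 0) + (if i ∈ M then W else 0) + if i = -1 then 1 else 0 := by
    rcases eq_or_ne i 0 with rfl | hi_zero
    · rw [show cycleWeight (0 : Fin k) = 1 / k by simp [cycleWeight], if_pos rfl, add_assoc]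
      exact le_add_of_nonneg_right (by positivity)
    by_cases hi_last : i = -1
    · rw [if_pos hi_last]
      exact (cycleWeight_le_one i).trans (le_add_of_nonneg_left (by positivity))
    · have hi_zero' : i.val ≠ 0 := by simpa using hi_zero
      have hi_last' : i.val + 1 ≠ k := val_add_one_eq_iff.not.2 hi_last
      have hiM : i ∈ M := mem_filter.2 ⟨hi, hi_zero', hi_last'⟩
      rw [if_neg hi_zero, if_pos hiM, if_neg hi_last, zero_add, add_zero]
      exact cycleWeight_le_of_mem_fittingPositions hi hi_zero' hi_last'
  calc ∑ i ∈ S, cycleWeight i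
      ≤ ∑ i ∈ S, ((if i = 0 then (1 / k : ℝ) else 0) + (if i ∈ M then W else 0) +
          if i = -1 then 1 else 0) := sum_le_sum fun i hi ↦ cycleWeight_le hi
    _ = (if 0 ∈ S then (1 / k : ℝ) else 0) + #M * W + if -1 ∈ S then 1 else 0 := by
        rw [sum_add_distrib, sum_add_distrib, sum_ite_eq', sum_ite_eq', sum_ite_mem,
          inter_eq_right.2 (filter_subset _ _), sum_const, nsmul_eq_mul]
    _ ≤ 1 / k + W + if -1 ∈ S then 1 else 0 := by
        have h_zero : (if 0 ∈ S then (1 / k : ℝ) else 0) ≤ 1 / k := by split_ifs <;> simp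
        gcongr
        exact mul_le_of_le_one_left hW (Nat.cast_le_one.2 card_filter_fittingPositions_le_one)

lemma cycleGraph_adj_iff (hk : 2 ≤ k) {i j : Fin k} :
    (cycleGraph k).Adj i j ↔ i - j = 1 ∨ j - i = 1 := by
  obtain ⟨m, rfl⟩ := Nat.exists_eq_add_of_le' hk
  exact cycleGraph_adj

lemma ofNat_ne_zero_of_lt {a : ℕ} [a.AtLeastTwo] (hak : a < k) : (ofNat(a) : Fin k) ≠ 0 := by
  rw [← Nat.cast_ofNat, ne_eq, Fin.natCast_eq_zero]
  exact Nat.not_dvd_of_pos_of_lt (Nat.pos_of_neZero a) hak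

lemma neg_one_mem_fittingPositions_iff (hk : 2 ≤ k) :
    -1 ∈ fittingPositions (cycleGraph k) B ↔ ∀ j ≠ -1, j ∈ B ↔ j = -2 ∨ j = 0 := by
  have hlt (j : Fin k) : j < -1 ↔ j ≠ -1 := by
    have h_last : (-1 : Fin k).val + 1 = k := val_add_one_eq_iff.2 rfl
    rw [Fin.lt_def, ne_eq, ← val_add_one_eq_iff]
    omega
  simp only [mem_fittingPositions, hlt, cycleGraph_adj_iff hk]
  refine forall₂_congr fun j _ ↦ iff_congr Iff.rfl (or_congr ?_ ?_) <;> grind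

/-- The automorphism `i ↦ s + i` of the cycle graph. -/
def cycleRotation (s : Fin k) : cycleGraph k ≃g cycleGraph k where
  toEquiv := Equiv.addLeft s
  map_rel_iff' := by simp [cycleGraph_adj']

@[simp]
lemma cycleRotation_apply (s i : Fin k) : cycleRotation s i = s + i := rfl

/-- The automorphism `i ↦ s - i` of the cycle graph. -/
def cycleReflection (s : Fin k) : cycleGraph k ≃g cycleGraph k where
  toEquiv := Equiv.subLeft s
  map_rel_iff' := by simp [cycleGraph_adj', or_comm]

@[simp]
lemma cycleReflection_apply (s i : Fin k) : cycleReflection s i = s - i := rfl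

lemma two_mul_le_card_cycleGraph_iso (hk : 3 ≤ k) :
    2 * k ≤ Nat.card (cycleGraph k ≃g cycleGraph k) := by
  have h_two : (2 : Fin k) ≠ 0 := ofNat_ne_zero_of_lt hk
  have h_inj : Function.Injective (Sum.elim (cycleRotation (k := k)) cycleReflection) := by
    refine Function.Injective.sumElim (fun s t h ↦ ?_) (fun s t h ↦ ?_) fun s t h ↦ ?_
    · simpa using DFunLike.congr_fun h 0
    · simpa using DFunLike.congr_fun h 0
    · have h₀ : s = t := by simpa using DFunLike.congr_fun h 0
      have h₁ : s + 1 = t - 1 := by simpa using DFunLike.congr_fun h 1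
      exact h_two (by linear_combination h₁ - h₀)
  have : Finite (cycleGraph k ≃g cycleGraph k) := DFunLike.finite _
  simpa [two_mul] using Nat.card_le_card_of_injective _ h_inj

lemma neg_one_mem_fittingPositions_rotation_iff (hk : 2 ≤ k) {A : Set (Fin k)} {s : Fin k} :
    -1 ∈ fittingPositions (cycleGraph k) (cycleRotation s ⁻¹' A) ↔ IsClosingAt A s := by
  rw [IsClosingAt, neg_one_mem_fittingPositions_iff hk,
    ← (Equiv.addLeft s).forall_congr_right (q := fun a ↦ a ≠ s - 1 → (a ∈ A ↔ a = s - 2 ∨ a = s))]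
  simp [sub_eq_add_neg]

lemma fittingPositions_cycleGraph_empty : fittingPositions (cycleGraph k) ∅ = {0} := by
  ext i
  rw [mem_singleton]
  refine ⟨fun hi ↦ ?_, ?_⟩
  · by_contra h
    simpa using exists_pred_mem_of_mem_fittingPositions hi (by simpa using h)
  · rintro rfl
    simp [mem_fittingPositions]

lemma sum_rotation_weight_le (hk : 5 ≤ k) (A : Set (Fin k)) :
    ∑ s, ∑ i ∈ fittingPositions (cycleGraph k) (cycleRotation s ⁻¹' A), cycleWeight i ≤ k := by
  classical
  have hk_pos : (0 : ℝ) < k := by positivity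
  rcases A.eq_empty_or_nonempty with rfl | hA
  · have : (1 : ℝ) ≤ k := mod_cast (by omega : 1 ≤ k)
    simpa [fittingPositions_cycleGraph_empty, cycleWeight, hk_pos.ne']
  set F : Finset (Fin k) := {s | s ∈ A ∨ s + 1 ∈ A}
  set L : Finset (Fin k) := {s | IsClosingAt A s}
  have h_three : (3 : Fin k) ≠ 0 := ofNat_ne_zero_of_lt (show 3 < k by omega)
  have h_four : (4 : Fin k) ≠ 0 := ofNat_ne_zero_of_lt (show 4 < k by omega)
  have hFL : 2 + 2 * #L ≤ #F := by
    convert two_add_two_mul_card_isClosingAt_le h_three h_four hA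
  calc ∑ s, ∑ i ∈ fittingPositions (cycleGraph k) (cycleRotation s ⁻¹' A), cycleWeight i
      ≤ ∑ s : Fin k, ((1 / k + 1 - if s ∈ F then 1 / 2 else 0) + if s ∈ L then 1 else 0 : ℝ) := by
        refine sum_le_sum fun s _ ↦ (sum_cycleWeight_fittingPositions_le _).trans_eq ?_
        simp only [neg_one_mem_fittingPositions_rotation_iff (show 2 ≤ k by omega), F, L,
          mem_filter_univ, Set.mem_preimage, cycleRotation_apply, add_zero]
        split_ifs <;> ring
    _ = 1 + k - #F / 2 + #L := by
        simp only [sum_add_distrib, sum_sub_distrib, sum_ite_mem, univ_inter, sum_const, card_univ,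
          Fintype.card_fin, nsmul_eq_mul, mul_one_div_cancel hk_pos.ne']
        ring
    _ ≤ k := by
        have : (2 + 2 * #L : ℝ) ≤ #F := mod_cast hFL
        linarith

lemma card_cycleGraph_embedding_le {V : Type*} [Fintype V] (G : SimpleGraph V)
    [Fintype (cycleGraph k ↪g G)] (hk : 5 ≤ k) :
    Fintype.card (cycleGraph k ↪g G) ≤ 4 * k * ((Fintype.card V : ℝ) / k) ^ k := by
  have h := card_embedding_le_of_weight cycleWeight_pos
    (sum_embedding_weight_mul_card_candidates_le (G := G) cycleRotation cycleWeight
      (by simpa using sum_rotation_weight_le hk))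
  rwa [prod_cycleWeight (by omega), one_div, inv_inv, mul_comm] at h

end Cycle

lemma card_inducedCopy_mul_card_iso_le {V W : Type*} [Finite V] [Finite W] (G : SimpleGraph V)
    (H : SimpleGraph W) :
    Nat.card {S : Set V // Nonempty (G.induce S ≃g H)} * Nat.card (H ≃g H) ≤
      Nat.card (H ↪g G) := by
  let e (S : {S : Set V // Nonempty (G.induce S ≃g H)}) : H ≃g G.induce S.1 := S.2.some.symm
  let F (p : {S : Set V // Nonempty (G.induce S ≃g H)} × (H ≃g H)) : H ↪g G :=
    (Embedding.induce p.1.1).comp (p.2.trans (e p.1)).toRelEmbedding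
  have range_F (p) : Set.range (F p) = p.1.1 := by
    change Set.range (Subtype.val ∘ p.2.trans (e p.1)) = p.1.1
    rw [(p.2.trans (e p.1)).surjective.range_comp, Subtype.range_coe]
  have F_injective : Function.Injective F := by
    rintro ⟨S, σ⟩ ⟨T, τ⟩ h
    obtain rfl : S = T := Subtype.ext (by
      simpa only [range_F] using congrArg (fun f : H ↪g G ↦ Set.range f) h)
    refine Prod.ext rfl (RelIso.ext fun i ↦ ?_)
    exact (e S).injective (Subtype.ext (DFunLike.congr_fun h i))
  have : Finite (H ↪g G) := DFunLike.finite _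
  simpa only [Nat.card_prod] using Nat.card_le_card_of_injective F F_injective

/-- For every integer `k ≥ 5` and every graph `G` on `n` vertices, the number of
induced copies of the cycle `C_k` (i.e. vertex subsets inducing a subgraph isomorphic to the
cycle of length `k`) in `G` is at most `2 n^k / k^k`. -/
theorem inducedCycleCount_le {V : Type} [Fintype V] (G : SimpleGraph V) (n k : ℕ)
    (hn : Fintype.card V = n) (hk : 5 ≤ k) :
    (Nat.card {S : Set V // Nonempty (G.induce S ≃g SimpleGraph.cycleGraph k)} : ℝ)
      ≤ 2 * n ^ k / k ^ k := by
  have : NeZero k := ⟨by omega⟩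
  have : Finite (cycleGraph k ↪g G) := DFunLike.finite _
  have := Fintype.ofFinite (cycleGraph k ↪g G)
  set T : ℕ := Nat.card {S : Set V // Nonempty (G.induce S ≃g cycleGraph k)}
  have hT : T * (2 * k) ≤ Fintype.card (cycleGraph k ↪g G) := calc
    T * (2 * k) ≤ T * Nat.card (cycleGraph k ≃g cycleGraph k) :=
      Nat.mul_le_mul_left T (two_mul_le_card_cycleGraph_iso (by omega))
    _ ≤ Fintype.card (cycleGraph k ↪g G) :=
      (card_inducedCopy_mul_card_iso_le G _).trans_eq Nat.card_eq_fintype_card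
  refine le_of_mul_le_mul_right ?_ (show (0 : ℝ) < 2 * k by positivity)
  calc (T : ℝ) * (2 * k) ≤ Fintype.card (cycleGraph k ↪g G) := mod_cast hT
    _ ≤ 4 * k * ((n : ℝ) / k) ^ k := hn ▸ card_cycleGraph_embedding_le G hk
    _ = 2 * n ^ k / k ^ k * (2 * k) := by rw [div_pow]; ring
end

section
/- Let G be a graph on n vertices, k ≥ 5 an integer, and let v_1 v_2 ⋯ v_k be an induced cycle of length k in G. For j = 1, ..., k, let D_j be the good k-tuple (v_j, v_{j−1}, v_{j+1}, v_{j+2}, ..., v_{j+k−2}), indices taken modulo k. Then w(D_1) + w(D_2) + ⋯ + w(D_k) ≥ k^k/(4 n^k). -/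
open Finset
open scoped Classical

/-- Index transposition swapping 0 and 1. -/
def swap01 (i : ℕ) : ℕ := if i = 0 then 1 else if i = 1 then 0 else i

/-- `y 0, y 1, …, y (k-1)` is an induced cycle of length `k` in `G`. -/
def IsInducedCycle {V : Type*} (G : SimpleGraph V) (k : ℕ) (y : ℕ → V) : Prop :=
  (∀ i < k, ∀ j < k, y i = y j → i = j) ∧
  ∀ i < k, ∀ j < k, (G.Adj (y i) (y j) ↔ (i + 1) % k = j ∨ (j + 1) % k = i)

/-- `y 0, y 1, …, y (m-1)` is an induced path on `m` vertices in `G`. -/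
def IsInducedPath {V : Type*} (G : SimpleGraph V) (m : ℕ) (y : ℕ → V) : Prop :=
  (∀ i < m, ∀ j < m, y i = y j → i = j) ∧
  ∀ i < m, ∀ j < m, (G.Adj (y i) (y j) ↔ i + 1 = j ∨ j + 1 = i)

/-- `(z 0, …, z (k-1))` is a good k-tuple: `z 1, z 0, z 2, …, z (k-1)` is an induced cycle. -/
def IsGoodTuple {V : Type*} (G : SimpleGraph V) (k : ℕ) (z : ℕ → V) : Prop :=
  IsInducedCycle G k (fun i => z (swap01 i))

/-- The sequence `z 1, z 0, z 2, …, z (i-2), x` of length `i`. -/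
def extSeq {V : Type*} (z : ℕ → V) (i : ℕ) (x : V) : ℕ → V :=
  fun p => if p = i - 1 then x else z (swap01 p)

/-- The quantity `n_i` associated with the (prefix of the) tuple `z`. -/
noncomputable def nq {V : Type*} (G : SimpleGraph V) (k : ℕ) (z : ℕ → V) (i : ℕ) : ℕ :=
  if i = 1 then Nat.card V
  else if i = 2 then Nat.card {x : V // G.Adj (z 0) x}
  else if i = 3 then Nat.card {x : V // G.Adj (z 0) x ∧ ¬ G.Adj (z 1) x}
  else if i < k then Nat.card {x : V // IsInducedPath G i (extSeq z i x)}
  else Nat.card {x : V // IsInducedCycle G k (extSeq z k x)}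

/-- The weight `w(D) = ∏_{i=1}^k 1/n_i` of a tuple. -/
noncomputable def wt {V : Type*} (G : SimpleGraph V) (k : ℕ) (z : ℕ → V) : ℝ :=
  ∏ i ∈ Finset.Icc 1 k, ((nq G k z i : ℝ))⁻¹

/-- View a `Fin k`-tuple as an `ℕ`-indexed tuple. -/
def tupFun {V : Type*} {k : ℕ} (hk : 0 < k) (z : Fin k → V) : ℕ → V :=
  fun i => z ⟨i % k, Nat.mod_lt i hk⟩

/-- The good tuple `D_j = (v_j, v_{j-1}, v_{j+1}, …, v_{j+k-2})` (0-indexed `j`, indices mod `k`). -/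
def Dtup {V : Type*} (k : ℕ) (v : ℕ → V) (j : ℕ) : ℕ → V :=
  fun p => if p = 0 then v (j % k)
    else if p = 1 then v ((j + k - 1) % k)
    else v ((j + p - 1) % k)

/-! In the cyclic order `v_{j-1}, v_j, v_{j+1}, …`, a vertex counted by `n_i` for `D_j` with
`3 ≤ i < k` is adjacent to exactly the last of the first `i - 1` cycle vertices; for `i = k` it is
also adjacent to the first. Hence for given `j` a vertex is counted for at most one `i ≥ 3`. Charge
`1/2` for being counted by `n_2` or by `n_3`, and `1` for each later count. Every vertex is then
charged at most `1` by each `D_j`, and the position of its neighbours on the cycle always leaves at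
least `1` unused between two consecutive tuples, so its total charge is at most `k - 1`. Therefore
the `k (k - 1)` numbers `n_i / 2` (`i = 2, 3`) and `n_i` (`i ≥ 4`) have mean at most `n / k`, and
the inequality of arithmetic and geometric means, first on these numbers and then on the weights,
gives the bound; the two halves produce the factor `1/4`. -/

section MeanInequalities

variable {ι κ : Type*}

lemma prod_le_mean_pow_card (s : Finset ι) (f : ι → ℝ) (hf : ∀ i ∈ s, 0 ≤ f i) :
    ∏ i ∈ s, f i ≤ ((∑ i ∈ s, f i) / #s) ^ #s := by
  rcases s.eq_empty_or_nonempty with rfl | hs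
  · simp
  have amgm := Real.geom_mean_le_arith_mean s (fun _ ↦ 1) f (fun _ _ ↦ zero_le_one)
    (by simpa using hs) hf
  simp only [Real.rpow_one, one_mul, sum_const, nsmul_eq_mul, mul_one] at amgm
  have hprod : 0 ≤ ∏ i ∈ s, f i := prod_nonneg hf
  calc ∏ i ∈ s, f i = ((∏ i ∈ s, f i) ^ ((#s : ℝ)⁻¹)) ^ #s :=
        (Real.rpow_inv_natCast_pow hprod hs.card_pos.ne').symm
    _ ≤ ((∑ i ∈ s, f i) / #s) ^ #s := by gcongr

lemma prod_le_pow_card_of_sum_le (s : Finset ι) (f : ι → ℝ) {a : ℝ} (hf : ∀ i ∈ s, 0 ≤ f i)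
    (hsum : ∑ i ∈ s, f i ≤ #s * a) : ∏ i ∈ s, f i ≤ a ^ #s := by
  rcases s.eq_empty_or_nonempty with rfl | hs
  · simp
  have hcard : (0 : ℝ) < #s := by exact_mod_cast hs.card_pos
  refine (prod_le_mean_pow_card s f hf).trans ?_
  have := sum_nonneg hf
  gcongr
  rwa [div_le_iff₀' hcard]

lemma card_mul_le_sum_of_pow_card_le_prod (s : Finset ι) (f : ι → ℝ) {b : ℝ}
    (hf : ∀ i ∈ s, 0 ≤ f i) (hprod : b ^ #s ≤ ∏ i ∈ s, f i) : #s * b ≤ ∑ i ∈ s, f i := by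
  rcases s.eq_empty_or_nonempty with rfl | hs
  · simp
  have hcard : (0 : ℝ) < #s := by exact_mod_cast hs.card_pos
  rw [← le_div_iff₀' hcard]
  exact le_of_pow_le_pow_left₀ hs.card_pos.ne' (div_nonneg (sum_nonneg hf) hcard.le)
    (hprod.trans (prod_le_mean_pow_card s f hf))

lemma card_mul_inv_pow_le_sum_inv_prod (s : Finset ι) (t : Finset κ) (M : ι → κ → ℝ) {a : ℝ}
    (hM : ∀ j ∈ s, ∀ i ∈ t, 0 < M j i) (hsum : ∑ j ∈ s, ∑ i ∈ t, M j i ≤ #s * #t * a) :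
    #s * (a ^ #t)⁻¹ ≤ ∑ j ∈ s, (∏ i ∈ t, M j i)⁻¹ := by
  have hrow : ∀ j ∈ s, 0 < ∏ i ∈ t, M j i := fun j hj ↦ prod_pos (hM j hj)
  have hprod : ∏ j ∈ s, ∏ i ∈ t, M j i ≤ (a ^ #t) ^ #s := by
    rw [← prod_product', ← pow_mul, mul_comm, ← card_product]
    refine prod_le_pow_card_of_sum_le _ _ (fun p hp ↦ ?_) ?_
    · exact (hM p.1 (mem_product.1 hp).1 p.2 (mem_product.1 hp).2).le
    · rwa [sum_product', card_product, Nat.cast_mul]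
  refine card_mul_le_sum_of_pow_card_le_prod s _ (fun j hj ↦ (inv_pos.2 (hrow j hj)).le) ?_
  rw [prod_inv_distrib, inv_pow]
  exact inv_anti₀ (prod_pos hrow) hprod

lemma sum_le_card_sub_one_of_add_le_one [Fintype ι] {f : ι → ℝ} (hf : ∀ i, f i ≤ 1) {i j : ι}
    (hij : i ≠ j) (hadd : f i + f j ≤ 1) : ∑ i, f i ≤ Fintype.card ι - 1 := by
  have hpair : ∑ l ∈ {i, j}, (1 - f l) ≤ ∑ l, (1 - f l) :=
    sum_le_univ_sum_of_nonneg fun l ↦ sub_nonneg.2 (hf l)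
  rw [sum_pair hij, sum_sub_distrib, sum_const, card_univ, nsmul_one] at hpair
  linarith

end MeanInequalities

lemma sum_range_natCast_zmod {M : Type*} [AddCommMonoid M] {k : ℕ} [NeZero k]
    (f : ZMod k → M) : ∑ j ∈ range k, f j = ∑ t, f t :=
  sum_bij' (fun j _ ↦ (j : ZMod k)) (fun t _ ↦ t.val) (fun _ _ ↦ mem_univ _)
    (fun t _ ↦ mem_range.2 (ZMod.val_lt t))
    (fun _ hj ↦ ZMod.val_cast_of_lt (mem_range.1 hj)) (fun t _ ↦ ZMod.natCast_zmod_val t)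
    (fun _ _ ↦ rfl)

/-- The factor by which `n_i` is rescaled before means are taken, that is, the charge for being
counted by `n_i`. -/
noncomputable def charge (i : ℕ) : ℝ := if i ≤ 3 then 1 / 2 else 1

lemma charge_pos (i : ℕ) : 0 < charge i := by
  unfold charge
  split_ifs <;> norm_num

lemma charge_le_one (i : ℕ) : charge i ≤ 1 := by
  unfold charge
  split_ifs <;> norm_num

lemma prod_charge {k : ℕ} (hk : 3 ≤ k) : ∏ i ∈ Icc 2 k, charge i = 1 / 4 := by
  induction k, hk using Nat.le_induction with
  | base => norm_num [prod_Icc_succ_top, charge]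
  | succ k hk ih => rw [prod_Icc_succ_top (by omega), ih, charge, if_neg (by omega), mul_one]

section CyclicTraces

variable {k : ℕ} {A : Set (ZMod k)} {t : ZMod k} {i : ℕ}

/-- The adjacency pattern forced on a vertex counted by `n_i` (`3 ≤ i ≤ k`) for the tuple `D_t`,
where `A` is the set of cycle positions adjacent to that vertex: among the first `i - 1` positions
`t - 1, t, t + 1, …`, the set `A` contains exactly the last one, together with the first one if
`i = k`. -/
def IsExtensionTrace (A : Set (ZMod k)) (t : ZMod k) (i : ℕ) : Prop :=
  ∀ m : ℕ, m + 1 < i → (t + m - 1 ∈ A ↔ m + 2 = i ∨ i = k ∧ m = 0)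

namespace IsExtensionTrace

lemma eq {j : ℕ} (hi : IsExtensionTrace A t i) (hj : IsExtensionTrace A t j) (hi2 : 2 < i)
    (hj2 : 2 < j) : i = j := by
  wlog hij : i ≤ j generalizing i j
  · exact (this hj hi hj2 hi2 (by omega)).symm
  have hmem : t + (i - 2 : ℕ) - 1 ∈ A := (hi (i - 2) (by omega)).2 (by omega)
  have := (hj (i - 2) (by omega)).1 hmem
  omega

lemma sub_one_mem_iff (h : IsExtensionTrace A t i) (hi : 2 < i) : t - 1 ∈ A ↔ i = k := by
  simpa [hi.ne] using h 0 (by omega)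

lemma mem_iff (h : IsExtensionTrace A t i) (hi : 2 < i) : t ∈ A ↔ i = 3 := by
  have := h 1 hi
  simp only [Nat.cast_one, add_sub_cancel_right] at this
  rw [this]
  omega

lemma sub_three_mem (h : IsExtensionTrace A t k) (hk : 2 ≤ k) : t - 3 ∈ A := by
  convert (h (k - 2) (by omega)).2 (by omega) using 1
  rw [Nat.cast_sub hk, ZMod.natCast_self]
  push_cast
  ring

lemma sub_five_notMem (h : IsExtensionTrace A t k) (hk : 5 ≤ k) : t - 5 ∉ A := by
  intro hmem
  have := (h (k - 4) (by omega)).1 (by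
    convert hmem using 1
    rw [Nat.cast_sub (by omega), ZMod.natCast_self]
    push_cast
    ring)
  omega

end IsExtensionTrace

/-- The total charge that `D_t` puts on a vertex adjacent to exactly the cycle positions in `A`. -/
noncomputable def load (A : Set (ZMod k)) (t : ZMod k) : ℝ :=
  (if t ∈ A then charge 2 else 0) +
    ∑ i ∈ Ioc 2 k, if IsExtensionTrace A t i then charge i else 0

lemma load_le_add {b : ℝ} (hb : 0 ≤ b)
    (hcharge : ∀ i ∈ Ioc 2 k, IsExtensionTrace A t i → charge i ≤ b) :
    load A t ≤ (if t ∈ A then charge 2 else 0) + b := by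
  rw [load]
  gcongr
  by_cases hex : ∃ i ∈ Ioc 2 k, IsExtensionTrace A t i
  · obtain ⟨i, hi, htrace⟩ := hex
    rw [sum_eq_single_of_mem i hi, if_pos htrace]
    · exact hcharge i hi htrace
    · exact fun j hj hji ↦
        if_neg fun h ↦ hji (h.eq htrace (mem_Ioc.1 hj).1 (mem_Ioc.1 hi).1)
  · push Not at hex
    rwa [sum_eq_zero fun i hi ↦ if_neg (hex i hi)]

lemma load_le_one (A : Set (ZMod k)) (t : ZMod k) : load A t ≤ 1 := by
  by_cases ht : t ∈ A
  · refine (load_le_add (b := 1 / 2) (by norm_num) fun i hi h ↦ ?_).trans ?_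
    · rw [(h.mem_iff (mem_Ioc.1 hi).1).1 ht]
      norm_num [charge]
    · rw [if_pos ht]
      norm_num [charge]
  · simpa [ht] using load_le_add (A := A) (t := t) zero_le_one fun i _ _ ↦ charge_le_one i

lemma load_le_of_forall_not (h : ∀ i ∈ Ioc 2 k, ¬IsExtensionTrace A t i) :
    load A t ≤ if t ∈ A then charge 2 else 0 := by
  simpa using load_le_add (A := A) (t := t) le_rfl fun i hi hi' ↦ (h i hi hi').elim

lemma load_le_half (hk : k ≠ 3) (hpred : t - 1 ∈ A) (ht : t ∈ A) : load A t ≤ 1 / 2 := by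
  refine (load_le_of_forall_not fun i hi h ↦ hk ?_).trans_eq ?_
  · have hi2 := (mem_Ioc.1 hi).1
    rw [← (h.sub_one_mem_iff hi2).1 hpred, (h.mem_iff hi2).1 ht]
  · rw [if_pos ht]
    norm_num [charge]

lemma load_nonpos_of_not_isExtensionTrace (hpred : t - 1 ∈ A) (ht : t ∉ A)
    (hclose : ¬IsExtensionTrace A t k) : load A t ≤ 0 := by
  refine (load_le_of_forall_not fun i hi h ↦ hclose ?_).trans_eq (if_neg ht)
  obtain rfl := (h.sub_one_mem_iff (mem_Ioc.1 hi).1).1 hpred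
  exact h

lemma load_empty_nonpos (t : ZMod k) : load ∅ t ≤ 0 := by
  refine (load_le_of_forall_not fun i hi h ↦ ?_).trans_eq (if_neg (Set.notMem_empty t))
  have := mem_Ioc.1 hi
  exact (h (i - 2) (by omega)).2 (by omega)

lemma load_add_load_le_one_of_three_mem (hk : k ≠ 3) (h₀ : t ∈ A) (h₁ : t + 1 ∈ A)
    (h₂ : t + 1 + 1 ∈ A) : load A (t + 1) + load A (t + 1 + 1) ≤ 1 := by
  have hfst : load A (t + 1) ≤ 1 / 2 := load_le_half hk (by simpa using h₀) h₁
  have hsnd : load A (t + 1 + 1) ≤ 1 / 2 := load_le_half hk (by simpa using h₁) h₂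
  linarith

lemma exists_load_add_load_le_one_of_mem_of_notMem (hk : 5 ≤ k) (ht : t ∈ A)
    (hsucc : t + 1 ∉ A) : ∃ s, load A s + load A (s + 1) ≤ 1 := by
  have of_nonpos : ∀ s, load A s ≤ 0 → load A s + load A (s + 1) ≤ 1 := fun s hs ↦ by
    linarith [load_le_one A (s + 1)]
  by_cases hclose : IsExtensionTrace A (t + 1) k
  · have hback : t - 2 ∈ A := by
      convert hclose.sub_three_mem (by omega) using 1
      ring
    have hgap : t - 4 ∉ A := by
      convert hclose.sub_five_notMem hk using 2
      ring
    by_cases hmid : t - 1 ∈ A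
    · exact ⟨t - 2 + 1, load_add_load_le_one_of_three_mem (by omega) hback
        (by convert hmid using 1; ring) (by convert ht using 1; ring)⟩
    · refine ⟨t - 1, of_nonpos _ (load_nonpos_of_not_isExtensionTrace ?_ hmid fun h ↦ hgap ?_)⟩
      · convert hback using 1
        ring
      · convert h.sub_three_mem (by omega) using 1
        ring
  · exact ⟨t + 1, of_nonpos _
      (load_nonpos_of_not_isExtensionTrace (by simpa using ht) hsucc hclose)⟩

lemma exists_load_add_load_le_one (hk : 5 ≤ k) (A : Set (ZMod k)) :
    ∃ s, load A s + load A (s + 1) ≤ 1 := by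
  rcases A.eq_empty_or_nonempty with rfl | ⟨t, ht⟩
  · exact ⟨0, by linarith [load_empty_nonpos (0 : ZMod k), load_empty_nonpos (0 + 1 : ZMod k)]⟩
  by_cases h₁ : t + 1 ∈ A
  · by_cases h₂ : t + 1 + 1 ∈ A
    · exact ⟨t + 1, load_add_load_le_one_of_three_mem (by omega) ht h₁ h₂⟩
    · exact exists_load_add_load_le_one_of_mem_of_notMem hk h₁ h₂
  · exact exists_load_add_load_le_one_of_mem_of_notMem hk ht h₁

lemma sum_load_le (hk : 5 ≤ k) (A : Set (ZMod k)) : ∑ j ∈ range k, load A j ≤ k - 1 := by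
  have : NeZero k := ⟨by omega⟩
  have : Fact (1 < k) := ⟨by omega⟩
  obtain ⟨s, hs⟩ := exists_load_add_load_le_one hk A
  simpa only [sum_range_natCast_zmod, ZMod.card] using
    sum_le_card_sub_one_of_add_le_one (load_le_one A) (left_ne_add.2 one_ne_zero) hs

end CyclicTraces

section InducedCycles

variable {V : Type*} {G : SimpleGraph V} {k : ℕ} {v : ℕ → V}

/-- The vertex `v_t` of a cycle `v` of length `k`, with the index `t` read modulo `k`. -/
def cycleVertex (k : ℕ) (v : ℕ → V) (t : ZMod k) : V := v t.val

namespace IsInducedCycle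

lemma cycleVertex_injective [NeZero k] (hv : IsInducedCycle G k v) :
    Function.Injective (cycleVertex k v) := fun s t hst ↦
  ZMod.val_injective k (hv.1 _ (ZMod.val_lt s) _ (ZMod.val_lt t) hst)

lemma adj_cycleVertex_iff [NeZero k] (hv : IsInducedCycle G k v) (s t : ZMod k) :
    G.Adj (cycleVertex k v s) (cycleVertex k v t) ↔ s + 1 = t ∨ t + 1 = s := by
  have val_succ : ∀ s t : ZMod k, (s.val + 1) % k = t.val ↔ s + 1 = t := fun s t ↦ by
    rw [← ZMod.val_natCast, (ZMod.val_injective k).eq_iff, Nat.cast_succ, ZMod.natCast_zmod_val]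
  rw [← val_succ, ← val_succ]
  exact hv.2 _ (ZMod.val_lt s) _ (ZMod.val_lt t)

lemma rotate [NeZero k] (hv : IsInducedCycle G k v) (s : ZMod k) :
    IsInducedCycle G k fun p ↦ cycleVertex k v (s + p) := by
  have cast_eq : ∀ p : ℕ, ∀ q < k, (p : ZMod k) = q ↔ p % k = q := fun p q hq ↦ by
    rw [ZMod.natCast_eq_natCast_iff', Nat.mod_eq_of_lt hq]
  constructor
  · intro p hp q hq hpq
    rwa [hv.cycleVertex_injective.eq_iff, add_right_inj, cast_eq p q hq,
      Nat.mod_eq_of_lt hp] at hpq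
  · intro p hp q hq
    rw [hv.adj_cycleVertex_iff, add_assoc, add_assoc, add_right_inj, add_right_inj,
      ← Nat.cast_succ, ← Nat.cast_succ, cast_eq _ q hq, cast_eq _ p hp]

lemma isInducedPath {i : ℕ} (hv : IsInducedCycle G k v) (hi : i < k) : IsInducedPath G i v := by
  refine ⟨fun p hp q hq ↦ hv.1 p (hp.trans hi) q (hq.trans hi), fun p hp q hq ↦ ?_⟩
  rw [hv.2 p (hp.trans hi) q (hq.trans hi), Nat.mod_eq_of_lt (by omega),
    Nat.mod_eq_of_lt (by omega)]

end IsInducedCycle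

lemma Dtup_swap01 [NeZero k] (v : ℕ → V) (j p : ℕ) :
    Dtup k v j (swap01 p) = cycleVertex k v (j + p - 1) := by
  have of_cast : ∀ m : ℕ, (m : ZMod k) = j + p - 1 → v (m % k) = cycleVertex k v (j + p - 1) :=
    fun m hm ↦ by rw [← hm, cycleVertex, ZMod.val_natCast]
  have := NeZero.pos k
  rcases p with _ | _ | p
  · exact of_cast _ (by rw [Nat.cast_sub (by omega)]; simp)
  · exact of_cast _ (by simp)
  · have hswap : swap01 (p + 2) = p + 2 := by simp [swap01]
    rw [hswap]
    exact of_cast _ (by rw [Nat.cast_sub (by omega)]; push_cast; ring)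

lemma Dtup_zero [NeZero k] (v : ℕ → V) (j : ℕ) : Dtup k v j 0 = cycleVertex k v j := by
  simpa [swap01] using Dtup_swap01 (k := k) v j 1

lemma Dtup_one [NeZero k] (v : ℕ → V) (j : ℕ) : Dtup k v j 1 = cycleVertex k v (j - 1) := by
  simpa [swap01] using Dtup_swap01 (k := k) v j 0

lemma extSeq_Dtup [NeZero k] (v : ℕ → V) (j i p : ℕ) (x : V) :
    extSeq (Dtup k v j) i x p = if p = i - 1 then x else cycleVertex k v (j + p - 1) := by
  rw [extSeq, Dtup_swap01]

lemma extSeq_Dtup_cycleVertex [NeZero k] (v : ℕ → V) (j i : ℕ) :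
    extSeq (Dtup k v j) i (cycleVertex k v (j + (i - 1 : ℕ) - 1)) =
      fun p : ℕ ↦ cycleVertex k v (j - 1 + p) := by
  funext p
  rw [extSeq_Dtup, sub_add_eq_add_sub]
  split_ifs with hp
  · rw [hp]
  · rfl

end InducedCycles

section Extensions

variable {V : Type*} {G : SimpleGraph V} {k : ℕ} {v : ℕ → V}

/-- `x` is one of the vertices counted by `n_i`, for `2 ≤ i`. -/
def IsExtension (G : SimpleGraph V) (k : ℕ) (z : ℕ → V) (i : ℕ) (x : V) : Prop :=
  if i = 2 then G.Adj (z 0) x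
  else if i = 3 then G.Adj (z 0) x ∧ ¬G.Adj (z 1) x
  else if i < k then IsInducedPath G i (extSeq z i x)
  else IsInducedCycle G k (extSeq z k x)

lemma nq_eq_card_isExtension {i : ℕ} (hi : i ≠ 1) (z : ℕ → V) :
    nq G k z i = Nat.card {x // IsExtension G k z i x} := by
  unfold nq IsExtension
  rw [if_neg hi]
  split_ifs <;> rfl

lemma nq_eq_sum [Fintype V] {i : ℕ} (hi : i ≠ 1) (z : ℕ → V) :
    (nq G k z i : ℝ) = ∑ x, if IsExtension G k z i x then 1 else 0 := by
  rw [nq_eq_card_isExtension hi, Nat.card_eq_fintype_card, Fintype.card_subtype, sum_boole]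

lemma exists_isExtension_Dtup (hv : IsInducedCycle G k v) (hk : 4 ≤ k) (j : ℕ) {i : ℕ}
    (hik : i ≤ k) : ∃ x, IsExtension G k (Dtup k v j) i x := by
  have : NeZero k := ⟨by omega⟩
  have hcycle : IsInducedCycle G k
      (extSeq (Dtup k v j) i (cycleVertex k v (j + (i - 1 : ℕ) - 1))) := by
    rw [extSeq_Dtup_cycleVertex]
    exact hv.rotate _
  unfold IsExtension
  split_ifs with h2 h3 hlt
  · exact ⟨cycleVertex k v (j + 1), by simp [Dtup_zero, hv.adj_cycleVertex_iff]⟩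
  · refine ⟨cycleVertex k v (j + 1), by simp [Dtup_zero, hv.adj_cycleVertex_iff], ?_⟩
    have ne_zero : ∀ m < k, 0 < m → (m : ZMod k) ≠ 0 := fun m hm hpos h ↦
      (Nat.le_of_dvd hpos ((ZMod.natCast_eq_zero_iff m k).1 h)).not_gt hm
    rw [Dtup_one, hv.adj_cycleVertex_iff]
    rintro (h | h)
    · exact ne_zero 1 (by omega) one_pos (by push_cast; linear_combination -h)
    · exact ne_zero 3 (by omega) (by omega) (by push_cast; linear_combination h)
  · exact ⟨_, hcycle.isInducedPath hlt⟩
  · obtain rfl : i = k := by omega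
    exact ⟨_, hcycle⟩

lemma nq_Dtup_pos [Finite V] (hv : IsInducedCycle G k v) (hk : 4 ≤ k) (j : ℕ) {i : ℕ}
    (hi : i ≠ 1) (hik : i ≤ k) : 0 < nq G k (Dtup k v j) i := by
  have := nonempty_subtype.2 (exists_isExtension_Dtup hv hk j hik)
  rw [nq_eq_card_isExtension hi]
  exact Nat.card_pos

/-- The positions of the neighbours of `x` on the cycle `v`. -/
def cycleTrace (G : SimpleGraph V) (k : ℕ) (v : ℕ → V) (x : V) : Set (ZMod k) :=
  {t | G.Adj (cycleVertex k v t) x}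

lemma IsExtension.mem_cycleTrace [NeZero k] {j : ℕ} {x : V}
    (h : IsExtension G k (Dtup k v j) 2 x) : (j : ZMod k) ∈ cycleTrace G k v x := by
  simpa [IsExtension, Dtup_zero, cycleTrace] using h

lemma IsExtension.isExtensionTrace {j i : ℕ} {x : V}
    (h : IsExtension G k (Dtup k v j) i x) (hi : i ∈ Ioc 2 k) (hk : k ≠ 3) :
    IsExtensionTrace (cycleTrace G k v x) j i := by
  intro m hm
  obtain ⟨h2i, hik⟩ := mem_Ioc.1 hi
  have : NeZero k := ⟨by omega⟩
  change G.Adj (cycleVertex k v (j + m - 1)) x ↔ _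
  unfold IsExtension at h
  rw [if_neg (by omega)] at h
  split_ifs at h with h3 hlt
  · subst h3
    rw [Dtup_zero, Dtup_one] at h
    obtain rfl | rfl : m = 0 ∨ m = 1 := by omega
    · simpa [hk.symm] using h.2
    · simpa using h.1
  · have hadj := h.2 m (by omega) (i - 1) (by omega)
    rw [extSeq_Dtup, extSeq_Dtup, if_neg (by omega), if_pos rfl] at hadj
    rw [hadj]
    omega
  · obtain rfl : i = k := by omega
    have hadj := h.2 m (by omega) (i - 1) (by omega)
    rw [extSeq_Dtup, extSeq_Dtup, if_neg (by omega), if_pos rfl, Nat.mod_eq_of_lt hm,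
      Nat.sub_add_cancel (by omega), Nat.mod_self] at hadj
    rw [hadj]
    omega

lemma sum_charge_isExtension_le_load (hk : 4 ≤ k) (j : ℕ) (x : V) :
    ∑ i ∈ Icc 2 k, (if IsExtension G k (Dtup k v j) i x then charge i else 0) ≤
      load (cycleTrace G k v x) j := by
  have : NeZero k := ⟨by omega⟩
  have ite_mono : ∀ {p q : Prop} (i : ℕ), (p → q) →
      (if p then charge i else 0) ≤ if q then charge i else 0 := fun i hpq ↦ by
    grind [charge_pos i]
  rw [← add_sum_Ioc_eq_sum_Icc (by omega), load]
  exact add_le_add (ite_mono 2 IsExtension.mem_cycleTrace)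
    (sum_le_sum fun i hi ↦ ite_mono i fun h ↦ h.isExtensionTrace hi (by omega))

lemma sum_charge_mul_nq_le [Fintype V] (hk : 5 ≤ k) (G : SimpleGraph V) (v : ℕ → V) :
    ∑ j ∈ range k, ∑ i ∈ Icc 2 k, charge i * nq G k (Dtup k v j) i ≤
      Fintype.card V * ((k : ℝ) - 1) := by
  have hcount : ∀ j, ∑ i ∈ Icc 2 k, charge i * nq G k (Dtup k v j) i =
      ∑ x, ∑ i ∈ Icc 2 k, if IsExtension G k (Dtup k v j) i x then charge i else 0 := fun j ↦ by
    rw [sum_comm]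
    refine sum_congr rfl fun i hi ↦ ?_
    rw [nq_eq_sum (by grind), mul_sum]
    simp only [mul_ite, mul_one, mul_zero]
  calc ∑ j ∈ range k, ∑ i ∈ Icc 2 k, charge i * nq G k (Dtup k v j) i
    _ = ∑ x, ∑ j ∈ range k, ∑ i ∈ Icc 2 k,
          if IsExtension G k (Dtup k v j) i x then charge i else 0 := by
        simp only [hcount]
        exact sum_comm
    _ ≤ ∑ x, ∑ j ∈ range k, load (cycleTrace G k v x) j := by
        gcongr
        exact sum_charge_isExtension_le_load (by omega) _ _
    _ ≤ ∑ _x : V, ((k : ℝ) - 1) := by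
        gcongr
        exact sum_load_le hk _
    _ = Fintype.card V * ((k : ℝ) - 1) := by rw [sum_const, card_univ, nsmul_eq_mul]

lemma wt_eq_inv_mul_inv_prod_charge (hk : 3 ≤ k) (G : SimpleGraph V) (z : ℕ → V) :
    wt G k z = (4 * Nat.card V : ℝ)⁻¹ * (∏ i ∈ Icc 2 k, charge i * nq G k z i)⁻¹ := by
  have h1 : nq G k z 1 = Nat.card V := if_pos rfl
  rw [wt, ← mul_prod_Ioc_eq_prod_Icc (by omega), h1, ← Icc_add_one_left_eq_Ioc,
    prod_mul_distrib, prod_charge hk, prod_inv_distrib, one_add_one_eq_two]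
  simp only [mul_inv, one_div, inv_inv]
  ring

end Extensions

/-- Let `G` be a graph on `n` vertices, `k ≥ 5`, and `v 0, v 1, …, v (k-1)` an
induced cycle of length `k` in `G`. With `D_j = (v_j, v_{j-1}, v_{j+1}, …, v_{j+k-2})`
(indices mod `k`), we have `w(D_1) + ⋯ + w(D_k) ≥ k^k / (4 n^k)`. -/
theorem sum_weights_of_cycle_ge {V : Type} [Fintype V] (G : SimpleGraph V) (n k : ℕ)
    (hn : Fintype.card V = n) (hk : 5 ≤ k) (v : ℕ → V) (hv : IsInducedCycle G k v) :
    (k : ℝ) ^ k / (4 * (n : ℝ) ^ k) ≤ ∑ j ∈ Finset.range k, wt G k (Dtup k v j) := by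
  have hkR : (k : ℝ) ≠ 0 := by exact_mod_cast (by omega : k ≠ 0)
  have hcard : #(Icc 2 k) = k - 1 := by simp
  have hmean := card_mul_inv_pow_le_sum_inv_prod (range k) (Icc 2 k)
    (fun j i ↦ charge i * nq G k (Dtup k v j) i) (a := n / k)
    (fun j _ i hi ↦ mul_pos (charge_pos i) <| by
      exact_mod_cast nq_Dtup_pos hv (by omega) j (by grind) (mem_Icc.1 hi).2)
    (by
      rw [card_range, hcard, Nat.cast_sub (by omega), Nat.cast_one, ← hn]
      refine (sum_charge_mul_nq_le hk G v).trans_eq ?_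
      field_simp)
  rw [card_range, hcard] at hmean
  calc (k : ℝ) ^ k / (4 * (n : ℝ) ^ k) = (4 * n : ℝ)⁻¹ * (k * ((n / k : ℝ) ^ (k - 1))⁻¹) := by
        obtain ⟨m, rfl⟩ : ∃ m, k = m + 1 := ⟨k - 1, by omega⟩
        rw [Nat.add_sub_cancel, div_pow, inv_div, pow_succ, pow_succ]
        ring
    _ ≤ (4 * n : ℝ)⁻¹ * ∑ j ∈ range k, (∏ i ∈ Icc 2 k, charge i * nq G k (Dtup k v j) i)⁻¹ := by
        gcongr
    _ = ∑ j ∈ range k, wt G k (Dtup k v j) := by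
        rw [mul_sum]
        refine sum_congr rfl fun j _ ↦ ?_
        rw [wt_eq_inv_mul_inv_prod_charge (by omega), Nat.card_eq_fintype_card, hn]
end

section
/- Let G be a graph on n vertices, k ≥ 5 an integer, and let v_1 v_2 ⋯ v_k be an induced cycle of length k in G. For j = 1, ..., k, let D_j = (v_j, v_{j−1}, v_{j+1}, v_{j+2}, ..., v_{j+k−2}) (indices modulo k) and let n_{j,i} denote the quantity n_i in the definition of the weight w(D_j). Then for every j = 1, ..., k, n_{j,2}/2 + n_{j,3}/2 + n_{j,4} + ⋯ + n_{j,k} ≤ n. -/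
open Finset
open scoped Classical

/-!
Number the tuple from `1` as on paper, so that `z_i` is `z (i - 1)`. A vertex `x` counted by `n_i`
with `4 ≤ i ≤ k` is the last vertex of an induced path or cycle `z_2 z_1 z_3 ⋯ z_{i-1} x`. So along
`z_1, z_3, z_4, …` (skipping `z_2`, which is adjacent to `x` exactly in the cycle case) the first
neighbour of `x` is `z_{i-1}`, whereas it is `z_1` for the vertices counted by `n_2`. Hence the sets
counted by `n_2, n_4, …, n_k` are pairwise disjoint, which gives `n_2 + n_4 + ⋯ + n_k ≤ n`; it
remains to use `n_3 ≤ n_2`.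
-/

theorem sum_ncard_le_card_of_pairwiseDisjoint {α ι : Type*} [Finite α] (t : Finset ι)
    {s : ι → Set α} (hs : (t : Set ι).PairwiseDisjoint s) :
    ∑ i ∈ t, (s i).ncard ≤ Nat.card α := by
  rw [← finsum_mem_coe_finset, ← t.finite_toSet.ncard_biUnion (fun i _ => (s i).toFinite) hs]
  exact Set.ncard_le_card _

section

variable {V : Type*} (G : SimpleGraph V)

/-- The set of vertices whose first neighbour along the sequence `u` is `u m`; for fixed `u` these
sets are the disjoint pieces into which the vertices counted by the `n_i` are sorted. -/
def firstNeighborSet (u : ℕ → V) (m : ℕ) : Set V :=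
  disjointed (fun p => G.neighborSet (u p)) m

theorem sum_ncard_firstNeighborSet_le_card [Finite V] (u : ℕ → V) (t : Finset ℕ) :
    ∑ m ∈ t, (firstNeighborSet G u m).ncard ≤ Nat.card V :=
  sum_ncard_le_card_of_pairwiseDisjoint t ((disjoint_disjointed _).set_pairwise _)

variable {G}

theorem mem_firstNeighborSet {u : ℕ → V} {m : ℕ} {x : V} :
    x ∈ firstNeighborSet G u m ↔ G.Adj (u m) x ∧ ∀ p < m, ¬ G.Adj (u p) x := by
  simp [firstNeighborSet, disjointed_eq_inter_compl]

theorem IsInducedPath.tail {m : ℕ} {y : ℕ → V} (h : IsInducedPath G (m + 1) y) :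
    IsInducedPath G m (fun p => y (p + 1)) := by
  refine ⟨fun i hi j hj hij => ?_, fun i hi j hj => ?_⟩
  · have := h.1 (i + 1) (by omega) (j + 1) (by omega) hij
    omega
  · rw [h.2 (i + 1) (by omega) (j + 1) (by omega)]
    omega

theorem IsInducedCycle.isInducedPath_tail {m : ℕ} {y : ℕ → V} (h : IsInducedCycle G (m + 1) y) :
    IsInducedPath G m (fun p => y (p + 1)) := by
  refine ⟨fun i hi j hj hij => ?_, fun i hi j hj => ?_⟩
  · have := h.1 (i + 1) (by omega) (j + 1) (by omega) hij
    omega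
  · have succ_mod_eq_iff : ∀ a < m, ∀ b < m, (a + 1 + 1) % (m + 1) = b + 1 ↔ a + 1 = b := by
      intro a ha b hb
      rcases (by omega : a + 1 < m ∨ a + 1 = m) with h_lt | rfl
      · rw [Nat.mod_eq_of_lt (by omega)]
        omega
      · rw [Nat.mod_self]
        omega
    rw [h.2 (i + 1) (by omega) (j + 1) (by omega), succ_mod_eq_iff i hi j hj,
      succ_mod_eq_iff j hj i hi]

theorem IsInducedPath.last_mem_firstNeighborSet {m : ℕ} {y : ℕ → V}
    (h : IsInducedPath G (m + 2) y) : y (m + 1) ∈ firstNeighborSet G y m := by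
  refine mem_firstNeighborSet.2 ⟨?_, fun p hp hadj => ?_⟩
  · exact (h.2 m (by omega) (m + 1) (by omega)).2 (Or.inl rfl)
  · have := (h.2 p (by omega) (m + 1) (by omega)).1 hadj
    omega

/-- The vertices `z 0, z 2, z 3, …`: the order `z 1, z 0, z 2, z 3, …` in which a good tuple runs
along its cycle, without the first vertex `z 1`. Each `n_i` is compared with a first-neighbour set
along this sequence. -/
def cycleOrderTail (z : ℕ → V) (p : ℕ) : V :=
  z (swap01 (p + 1))

theorem mem_firstNeighborSet_cycleOrderTail {z : ℕ → V} {m : ℕ} {x : V}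
    (h : IsInducedPath G (m + 2) (fun p => extSeq z (m + 3) x (p + 1))) :
    x ∈ firstNeighborSet G (cycleOrderTail z) m := by
  have extSeq_last : extSeq z (m + 3) x (m + 2) = x := by simp [extSeq]
  have extSeq_of_le : ∀ p ≤ m, extSeq z (m + 3) x (p + 1) = cycleOrderTail z p :=
    fun p hp => if_neg (by omega)
  obtain ⟨hadj, hnadj⟩ := mem_firstNeighborSet.1 h.last_mem_firstNeighborSet
  rw [extSeq_last] at hadj hnadj
  refine mem_firstNeighborSet.2 ⟨extSeq_of_le m le_rfl ▸ hadj, fun p hp => ?_⟩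
  exact extSeq_of_le p hp.le ▸ hnadj p hp

variable (G)

theorem nq_eq_ncard_of_lt {k i : ℕ} (z : ℕ → V) (hi : 4 ≤ i) (hik : i < k) :
    nq G k z i = {x | IsInducedPath G i (extSeq z i x)}.ncard := by
  rw [nq, if_neg (by omega), if_neg (by omega), if_neg (by omega), if_pos hik]
  rfl

theorem nq_self_eq_ncard {k : ℕ} (z : ℕ → V) (hk : 4 ≤ k) :
    nq G k z k = {x | IsInducedCycle G k (extSeq z k x)}.ncard := by
  rw [nq, if_neg (by omega), if_neg (by omega), if_neg (by omega), if_neg (lt_irrefl k)]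
  rfl

theorem nq_two_eq_ncard_firstNeighborSet (k : ℕ) (z : ℕ → V) :
    nq G k z 2 = (firstNeighborSet G (cycleOrderTail z) 0).ncard := by
  rw [firstNeighborSet, disjointed_zero]
  rfl

theorem nq_le_ncard_firstNeighborSet [Finite V] {k m : ℕ} (z : ℕ → V) (hmk : m + 4 ≤ k) :
    nq G k z (m + 4) ≤ (firstNeighborSet G (cycleOrderTail z) (m + 1)).ncard := by
  rcases hmk.lt_or_eq with h_lt | rfl
  · rw [nq_eq_ncard_of_lt G z (by omega) h_lt]
    exact Set.ncard_le_ncard fun x hx =>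
      mem_firstNeighborSet_cycleOrderTail (IsInducedPath.tail hx)
  · rw [nq_self_eq_ncard G z (by omega)]
    exact Set.ncard_le_ncard fun x hx =>
      mem_firstNeighborSet_cycleOrderTail (IsInducedCycle.isInducedPath_tail hx)

theorem nq_three_le_nq_two [Finite V] (k : ℕ) (z : ℕ → V) : nq G k z 3 ≤ nq G k z 2 :=
  Set.ncard_le_ncard (s := {x | G.Adj (z 0) x ∧ ¬ G.Adj (z 1) x}) fun _ hx => hx.1

theorem nq_two_add_sum_nq_le_card [Finite V] (k : ℕ) (z : ℕ → V) :
    nq G k z 2 + ∑ i ∈ Finset.Icc 4 k, nq G k z i ≤ Nat.card V := by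
  set F := firstNeighborSet G (cycleOrderTail z)
  have sum_nq_le : ∑ i ∈ Finset.Icc 4 k, nq G k z i ≤
      ∑ m ∈ range (k + 1 - 4), (F (m + 1)).ncard := by
    rw [← Finset.Ico_add_one_right_eq_Icc, sum_Ico_eq_sum_range]
    refine sum_le_sum fun m hm => ?_
    rw [add_comm 4 m]
    exact nq_le_ncard_firstNeighborSet G z (by have := mem_range.1 hm; omega)
  calc nq G k z 2 + ∑ i ∈ Finset.Icc 4 k, nq G k z i
      ≤ (F 0).ncard + ∑ m ∈ range (k + 1 - 4), (F (m + 1)).ncard :=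
        add_le_add (nq_two_eq_ncard_firstNeighborSet G k z).le sum_nq_le
    _ = ∑ m ∈ range (k + 1 - 4 + 1), (F m).ncard := by rw [sum_range_succ', add_comm]
    _ ≤ Nat.card V := sum_ncard_firstNeighborSet_le_card G _ _

theorem weighted_count_le_general [Finite V] (k : ℕ) (z : ℕ → V) :
    (nq G k z 2 : ℝ) / 2 + (nq G k z 3 : ℝ) / 2 + ∑ i ∈ Finset.Icc 4 k, (nq G k z i : ℝ) ≤
      Nat.card V := by
  have three_le_two : (nq G k z 3 : ℝ) ≤ nq G k z 2 := by exact_mod_cast nq_three_le_nq_two G k z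
  have two_add_sum_le :
      (nq G k z 2 : ℝ) + ∑ i ∈ Finset.Icc 4 k, (nq G k z i : ℝ) ≤ Nat.card V := by
    exact_mod_cast nq_two_add_sum_nq_le_card G k z
  linarith

end

/-- Let `G` be a graph on `n` vertices, `k ≥ 5`, and `v 0, …, v (k-1)` an induced
cycle of length `k` in `G`. For each `j` (0-indexed, `j < k`), with `n_{j,i}` the quantity
`n_i` for the good tuple `D_j = (v_j, v_{j-1}, v_{j+1}, …, v_{j+k-2})`, we have
`n_{j,2}/2 + n_{j,3}/2 + n_{j,4} + ⋯ + n_{j,k} ≤ n`. -/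
theorem weighted_count_le {V : Type} [Fintype V] (G : SimpleGraph V) (n k : ℕ)
    (hn : Fintype.card V = n) (hk : 5 ≤ k) (v : ℕ → V) (hv : IsInducedCycle G k v)
    (j : ℕ) (hj : j < k) :
    (nq G k (Dtup k v j) 2 : ℝ) / 2 + (nq G k (Dtup k v j) 3 : ℝ) / 2
        + ∑ i ∈ Finset.Icc 4 k, (nq G k (Dtup k v j) i : ℝ) ≤ n := by
  rw [← hn, ← Nat.card_eq_fintype_card]
  exact weighted_count_le_general G k (Dtup k v j)
end

section
/- Let G be a graph on n vertices, k ≥ 5 an integer, let v_1 v_2 ⋯ v_k be an induced cycle of length k in G, let D_j = (v_j, v_{j−1}, v_{j+1}, v_{j+2}, ..., v_{j+k−2}) for j = 1, ..., k (indices modulo k), and let n_{j,i} denote the quantity n_i in the definition of w(D_j). Fix a vertex x of G and fix j ∈ {1,...,k}. Then the contribution of x to n_{j,2}/2 + n_{j,3}/2 + n_{j,4} + ⋯ + n_{j,k} is at most 1; that is, (1/2)·[x ∈ S_{j,2}] + (1/2)·[x ∈ S_{j,3}] + ∑_{i=4}^{k} [x ∈ S_{j,i}] ≤ 1, where S_{j,i}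 is the set of vertices counted by n_{j,i}. -/
open Finset
open scoped Classical

/-- Membership in the set `S_i` counted by `n_i` (for `2 ≤ i ≤ k`): `memS G k z i x` says that
`x` belongs to the set of vertices counted by the quantity `n_i` of the tuple `z`. -/
def memS {V : Type*} (G : SimpleGraph V) (k : ℕ) (z : ℕ → V) (i : ℕ) (x : V) : Prop :=
  if i = 2 then G.Adj (z 0) x
  else if i = 3 then G.Adj (z 0) x ∧ ¬ G.Adj (z 1) x
  else if i < k then IsInducedPath G i (extSeq z i x)
  else IsInducedCycle G k (extSeq z k x)

/-!
Neighbours of `z 0` can only be counted in `S_2` and `S_3`, with total weight at most `1`. For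
`4 ≤ i ≤ k`, a vertex `x ∈ S_i` closes an induced path or cycle whose earlier vertices are
`z 1, z 0, z 2, …, z (i - 2)`. The first of these after `z 1` that is adjacent to `x` is
`z (i - 2)`. Hence `x` determines `i`, and `x` is not adjacent to `z 0`.
-/

section

variable {V : Type*} {G : SimpleGraph V} {k m i i' q : ℕ} {y z : ℕ → V} {x : V}

theorem IsInducedPath.adj_last_iff (h : IsInducedPath G (m + 1) y) (hq : q < m) :
    G.Adj (y m) (y q) ↔ q + 1 = m := by
  rw [h.2 m (by omega) q (by omega)]
  omega

theorem IsInducedCycle.adj_last_iff (h : IsInducedCycle G (m + 1) y) (hq : q < m) :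
    G.Adj (y m) (y q) ↔ q = 0 ∨ q + 1 = m := by
  rw [h.2 m (by omega) q (by omega), Nat.mod_self, Nat.mod_eq_of_lt (by omega), eq_comm]

theorem extSeq_last (z : ℕ → V) (m : ℕ) (x : V) : extSeq z (m + 1) x m = x :=
  if_pos rfl

theorem extSeq_of_lt (z : ℕ → V) (x : V) (hq : q < m) :
    extSeq z (m + 1) x q = z (swap01 q) :=
  if_neg hq.ne

theorem memS_two : memS G k z 2 x ↔ G.Adj (z 0) x := by
  simp [memS]

theorem memS_three : memS G k z 3 x ↔ G.Adj (z 0) x ∧ ¬ G.Adj (z 1) x := by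
  simp [memS]

theorem memS.isInducedPath_or_isInducedCycle (h : memS G k z i x) (hi : i ∈ Icc 4 k) :
    IsInducedPath G i (extSeq z i x) ∨ IsInducedCycle G i (extSeq z i x) := by
  obtain ⟨four_le, le_k⟩ := mem_Icc.mp hi
  rw [memS, if_neg (by omega), if_neg (by omega)] at h
  split_ifs at h with lt_k
  · exact .inl h
  · obtain rfl : i = k := by omega
    exact .inr h

theorem memS.adj_iff (h : memS G k z i x) (hi : i ∈ Icc 4 k) (hq : 0 < q) (hqi : q + 1 < i) :
    G.Adj x (z (swap01 q)) ↔ q + 2 = i := by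
  obtain ⟨m, rfl⟩ : ∃ m, i = m + 1 := ⟨i - 1, by omega⟩
  have hqm : q < m := by omega
  rw [← extSeq_of_lt z x hqm]
  nth_rw 1 [← extSeq_last z m x]
  rcases h.isInducedPath_or_isInducedCycle hi with path | cycle
  · rw [path.adj_last_iff hqm]
    omega
  · rw [cycle.adj_last_iff hqm]
    omega

theorem memS.not_adj_zero (h : memS G k z i x) (hi : i ∈ Icc 4 k) : ¬ G.Adj (z 0) x := by
  have four_le := (mem_Icc.mp hi).1
  intro adj
  have : 1 + 2 = i := (h.adj_iff hi one_pos (by omega)).mp adj.symm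
  omega

theorem memS.index_le (h : memS G k z i x) (hi : i ∈ Icc 4 k) (h' : memS G k z i' x)
    (hi' : i' ∈ Icc 4 k) : i' ≤ i := by
  by_contra! lt
  have four_le := (mem_Icc.mp hi).1
  have adj : G.Adj x (z (swap01 (i - 2))) :=
    (h.adj_iff hi (by omega) (by omega)).mpr (by omega)
  have : i - 2 + 2 = i' := (h'.adj_iff hi' (by omega) (by omega)).mp adj
  omega

theorem sum_memS_le_one (G : SimpleGraph V) (k : ℕ) (z : ℕ → V) (x : V) :
    ∑ i ∈ Icc 4 k, (if memS G k z i x then (1 : ℝ) else 0) ≤ 1 := by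
  rw [sum_boole, Nat.cast_le_one, card_le_one]
  intro i hi i' hi'
  obtain ⟨i_mem, h⟩ := mem_filter.mp hi
  obtain ⟨i'_mem, h'⟩ := mem_filter.mp hi'
  exact le_antisymm (h'.index_le i'_mem h i_mem) (h.index_le i_mem h' i'_mem)

theorem sum_memS_eq_zero_of_adj (k : ℕ) (hx : G.Adj (z 0) x) :
    ∑ i ∈ Icc 4 k, (if memS G k z i x then (1 : ℝ) else 0) = 0 :=
  sum_eq_zero fun _ hi => if_neg fun h => h.not_adj_zero hi hx

end

theorem contribution_le_one_general {V : Type*} (G : SimpleGraph V) (k : ℕ) (z : ℕ → V) (x : V) :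
    (if memS G k z 2 x then (1 : ℝ) / 2 else 0)
        + (if memS G k z 3 x then (1 : ℝ) / 2 else 0)
        + ∑ i ∈ Icc 4 k, (if memS G k z i x then (1 : ℝ) else 0)
      ≤ 1 := by
  by_cases hx : G.Adj (z 0) x
  · rw [sum_memS_eq_zero_of_adj k hx]
    split_ifs <;> norm_num
  · have not_mem_two : ¬ memS G k z 2 x := fun h => hx (memS_two.mp h)
    have not_mem_three : ¬ memS G k z 3 x := fun h => hx (memS_three.mp h).1
    simpa only [if_neg not_mem_two, if_neg not_mem_three, zero_add] using
      sum_memS_le_one G k z x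

/-- Let `G` be a graph on `n` vertices, `k ≥ 5`, `v 0, …, v (k-1)` an induced
cycle of length `k` in `G`, and `D_j = (v_j, v_{j-1}, v_{j+1}, …, v_{j+k-2})` (indices mod
`k`). For every vertex `x` and every `j < k` (0-indexed), the contribution of `x` to
`n_{j,2}/2 + n_{j,3}/2 + n_{j,4} + ⋯ + n_{j,k}` is at most `1`:
`(1/2)[x ∈ S_{j,2}] + (1/2)[x ∈ S_{j,3}] + ∑_{i=4}^{k} [x ∈ S_{j,i}] ≤ 1`. -/
theorem contribution_le_one {V : Type} [Fintype V] (G : SimpleGraph V) (n k : ℕ)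
    (hn : Fintype.card V = n) (hk : 5 ≤ k) (v : ℕ → V) (hv : IsInducedCycle G k v)
    (x : V) (j : ℕ) (hj : j < k) :
    (if memS G k (Dtup k v j) 2 x then (1 : ℝ) / 2 else 0)
        + (if memS G k (Dtup k v j) 3 x then (1 : ℝ) / 2 else 0)
        + ∑ i ∈ Finset.Icc 4 k, (if memS G k (Dtup k v j) i x then (1 : ℝ) else 0)
      ≤ 1 :=
  contribution_le_one_general G k (Dtup k v j) x
end
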